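/- arXiv:2303.04840 — 2 statements merged into one kernel-verified Lean document; each statement's English description precedes it below -/
import Mathlib

section
/- Let N_S and N_S* be natural numbers with N_S ≥ 1 and N_S* ≥ 1, and let T be a real number with T ≥ 2·N_S + 2. Then (1 − (N_S + 1)/T) · min( N_S + 1, N_S + N_S*·N_S/(T − 1 − N_S) ) ≥ N_S·(1 − N_S/T). Moreover, if N_S* ≥ 2 the inequality is strict. -/
/-- With one active relay antenna, the product-superposition scheme achieves at
least the direct-link degrees of freedom `N_S·(1 − N_S/T)`, strictly more when
`N_S* ≥ 2`. -/
theorem product_superposition_beats_direct_link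
    (N_S NSstar : ℕ) (hNS : 1 ≤ N_S) (hNSstar : 1 ≤ NSstar)
    (T : ℝ) (hT : 2 * (N_S : ℝ) + 2 ≤ T) :
    (1 - ((N_S : ℝ) + 1) / T) *
        min ((N_S : ℝ) + 1)
          ((N_S : ℝ) + (NSstar : ℝ) * (N_S : ℝ) / (T - 1 - (N_S : ℝ)))
      ≥ (N_S : ℝ) * (1 - (N_S : ℝ) / T)
    ∧ (2 ≤ NSstar →
      (1 - ((N_S : ℝ) + 1) / T) *
          min ((N_S : ℝ) + 1)
            ((N_S : ℝ) + (NSstar : ℝ) * (N_S : ℝ) / (T - 1 - (N_S : ℝ)))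
        > (N_S : ℝ) * (1 - (N_S : ℝ) / T)) := by
  have hN : (1 : ℝ) ≤ (N_S : ℝ) := by exact_mod_cast hNS
  have hs : (1 : ℝ) ≤ (NSstar : ℝ) := by exact_mod_cast hNSstar
  have hT0 : 0 < T := by linarith
  have hD : 0 < T - 1 - (N_S : ℝ) := by linarith
  have e0 : 1 - ((N_S : ℝ) + 1) / T = (T - 1 - (N_S : ℝ)) / T := by
    field_simp
    ring
  have hA : 0 ≤ 1 - ((N_S : ℝ) + 1) / T := by
    rw [e0]; positivity
  have e1 : (1 - ((N_S : ℝ) + 1) / T) * ((N_S : ℝ) + 1)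
      = (N_S : ℝ) * (1 - (N_S : ℝ) / T) + (T - 2 * (N_S : ℝ) - 1) / T := by
    field_simp
    ring
  have e2 : (1 - ((N_S : ℝ) + 1) / T) *
      ((N_S : ℝ) + (NSstar : ℝ) * (N_S : ℝ) / (T - 1 - (N_S : ℝ)))
      = (N_S : ℝ) * (1 - (N_S : ℝ) / T) + ((NSstar : ℝ) - 1) * (N_S : ℝ) / T := by
    rw [e0]
    have hD' := hD.ne'
    field_simp
    ring
  have p1 : 0 < (T - 2 * (N_S : ℝ) - 1) / T := div_pos (by linarith) hT0
  rw [mul_min_of_nonneg _ _ hA, e1, e2]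
  refine ⟨le_min (by linarith) ?_, fun h2 => lt_min (by linarith) ?_⟩
  · have : 0 ≤ ((NSstar : ℝ) - 1) * (N_S : ℝ) / T :=
      div_nonneg (mul_nonneg (by linarith) (by linarith)) hT0.le
    linarith
  · have h2' : (2 : ℝ) ≤ (NSstar : ℝ) := by exact_mod_cast h2
    have : 0 < ((NSstar : ℝ) - 1) * (N_S : ℝ) / T :=
      div_pos (mul_pos (by linarith) (by linarith)) hT0
    linarith
end

section
/- Let N_S, N_S*, n_r be natural numbers and T a real number with T > N_S + n_r. For a positive integer K define g(K) = (1 − (N_S + n_r)/T) · min( (N_S + n_r)·(1 + (K − 1)·n_r/(K·(T − n_r − N_S))), N_S·(1 + (K·N_S* + (K − 1)·n_r)/(K·(T − n_r − N_S))) ). Then g is nondecreasing: for all positive integers K ≤ K', g(K) ≤ g(K'). -/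
/-- The achievable degrees-of-freedom expression of Theorem 1 for
`T_RD = K·T_SD` is nondecreasing in the coherence-time ratio `K` over the
positive integers. -/
theorem dof_monotone_in_K
    (N_S NSstar n_r : ℕ) (T : ℝ) (hT : (N_S : ℝ) + (n_r : ℝ) < T)
    (g : ℕ → ℝ)
    (hg : ∀ K : ℕ, g K =
      (1 - ((N_S : ℝ) + (n_r : ℝ)) / T) *
        min
          (((N_S : ℝ) + (n_r : ℝ)) *
            (1 + ((K : ℝ) - 1) * (n_r : ℝ)
              / ((K : ℝ) * (T - (n_r : ℝ) - (N_S : ℝ)))))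
          ((N_S : ℝ) *
            (1 + ((K : ℝ) * (NSstar : ℝ) + ((K : ℝ) - 1) * (n_r : ℝ))
              / ((K : ℝ) * (T - (n_r : ℝ) - (N_S : ℝ)))))) :
    ∀ K K' : ℕ, 1 ≤ K → K ≤ K' → g K ≤ g K' := by
  intro K K' hK hKK
  have h1 : (1 : ℝ) ≤ K := by exact_mod_cast hK
  have h2 : (K : ℝ) ≤ K' := by exact_mod_cast hKK
  have hS : (0 : ℝ) ≤ N_S := Nat.cast_nonneg _
  have hR : (0 : ℝ) ≤ n_r := Nat.cast_nonneg _
  have hD : 0 < T - (n_r : ℝ) - (N_S : ℝ) := by linarith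
  have hTpos : 0 < T := by linarith
  have hpre : 0 ≤ 1 - ((N_S : ℝ) + (n_r : ℝ)) / T := by
    rw [sub_nonneg, div_le_one hTpos]
    exact hT.le
  rw [hg K, hg K']
  generalize T - (n_r : ℝ) - (N_S : ℝ) = D at hD
  have hk : (0 : ℝ) < K := by linarith
  have hk' : (0 : ℝ) < K' := by linarith
  have key : 0 ≤ (n_r : ℝ) * ((K' : ℝ) - K) * D :=
    mul_nonneg (mul_nonneg hR (by linarith)) hD.le
  refine mul_le_mul_of_nonneg_left (min_le_min ?_ ?_) hpre
  · refine mul_le_mul_of_nonneg_left (add_le_add le_rfl ?_) (by linarith)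
    rw [div_le_div_iff₀ (by positivity) (by positivity)]
    linarith
  · refine mul_le_mul_of_nonneg_left (add_le_add le_rfl ?_) hS
    rw [div_le_div_iff₀ (by positivity) (by positivity)]
    linarith
end
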